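/- Classification of the places of 𝔽_q(t): every absolute value |·| : 𝔽_q(t) → ℝ which is nontrivial (i.e. |x| ≠ 1 for some nonzero x) is equivalent to the normalized absolute value of exactly one place of the projective line; precisely, there exists a real number s > 0 such that either |f| = (q^{intDegree(f)})^s for all nonzero f (the place at infinity), or there exists a unique monic irreducible polynomial π ∈ 𝔽_q[t] with |f| = (q^{−deg(π)·ord_π(f)})^s for all nonzero f, and these two alternatives are mutually exclusive. -/

import Mathlib

/-!
Over the finite field `Fq`, every nonzero constant is a root of unity, so `v` is trivial on `Fq`.
In particular `v` is bounded by `1` on the image of `ℕ`, hence it is ultrametric and defines a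
valuation `toVal v` with values in `ℝ≥0`.

If `v t > 1`, the leading term of a polynomial strictly dominates the other terms, so
`v f = (v t) ^ intDegree f`. If `v t ≤ 1`, then `v ≤ 1` on polynomials, and a nonzero polynomial of
least degree with `v < 1` is irreducible; let `π` be its monic associate. A polynomial `c` prime to
`π` satisfies a Bézout identity `a π + b c = 1`, which forces `v c = 1`, so
`v f = (v π) ^ ord_π f`. In either case `s` is the logarithm of the one relevant value of `v` (or
its inverse) to the base `q ^ deg`.

The alternatives exclude each other because the value at a polynomial `π` is `> 1` for the place at
infinity, `< 1` for the place `π`, and `1` for any other finite place.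
-/

/-- The order of vanishing of a nonzero rational function `f ∈ 𝔽_q(t)` at a monic
irreducible polynomial `π`: the multiplicity of `π` in the numerator minus the
multiplicity of `π` in the denominator. -/
noncomputable def ordAt {Fq : Type} [Field Fq]
    (π : Polynomial Fq) (f : RatFunc Fq) : ℤ :=
  (multiplicity π f.num : ℤ) - (multiplicity π f.denom : ℤ)

open scoped NNReal

lemma abv_natCast_le_one {Fq : Type} [Field Fq] [Fintype Fq]
    (v : AbsoluteValue (RatFunc Fq) ℝ) (n : ℕ) : v (n : RatFunc Fq) ≤ 1 := by
  have hn : (n : RatFunc Fq) = algebraMap Fq (RatFunc Fq) (n : Fq) := by simp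
  by_cases h : (n : Fq) = 0
  · rw [hn, h]; simp
  · have h1 : v (n : RatFunc Fq) ^ (Fintype.card Fq - 1) = 1 := by
      rw [← map_pow, hn, ← map_pow, FiniteField.pow_card_sub_one_eq_one _ h, map_one, map_one]
    have h2 : Fintype.card Fq - 1 ≠ 0 := by
      have := Fintype.one_lt_card (α := Fq)
      omega
    exact ((pow_eq_one_iff_of_nonneg (v.nonneg _) h2).1 h1).le

lemma abv_add_le_max {Fq : Type} [Field Fq] [Fintype Fq]
    (v : AbsoluteValue (RatFunc Fq) ℝ) (x y : RatFunc Fq) : v (x + y) ≤ max (v x) (v y) := by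
  let := v.toNormedField
  have : IsUltrametricDist (RatFunc Fq) :=
    IsUltrametricDist.isUltrametricDist_of_forall_norm_natCast_le_one (abv_natCast_le_one v)
  exact IsUltrametricDist.norm_add_le_max x y

/-- The absolute value `v`, regarded as a valuation with values in `ℝ≥0`. -/
noncomputable def toVal {Fq : Type} [Field Fq] [Fintype Fq]
    (v : AbsoluteValue (RatFunc Fq) ℝ) : Valuation (RatFunc Fq) ℝ≥0 where
  toFun x := ⟨v x, v.nonneg x⟩
  map_zero' := Subtype.ext (map_zero v)
  map_one' := Subtype.ext (map_one v)
  map_mul' x y := Subtype.ext (map_mul v x y)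
  map_add_le_max' x y := abv_add_le_max v x y

lemma coe_toVal {Fq : Type} [Field Fq] [Fintype Fq]
    (v : AbsoluteValue (RatFunc Fq) ℝ) (x : RatFunc Fq) : (toVal v x : ℝ) = v x := rfl

/-- A valuation that is at most `1` on polynomials and less than `1` at the irreducible `π` takes
the value `1` at every polynomial prime to `π`, by Bézout; so it only sees the power of `π`. -/
lemma val_polynomial_eq {Fq : Type} [Field Fq] (w : Valuation (RatFunc Fq) ℝ≥0)
    (hle : ∀ p : Polynomial Fq, w (algebraMap _ _ p) ≤ 1) {π : Polynomial Fq}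
    (hπ : Irreducible π) (hlt : w (algebraMap _ _ π) < 1) {p : Polynomial Fq} (hp : p ≠ 0) :
    w (algebraMap _ _ p) = w (algebraMap _ _ π) ^ multiplicity π p := by
  obtain ⟨c, hc, hdvd⟩ :=
    (FiniteMultiplicity.of_prime_left hπ.prime hp).exists_eq_pow_mul_and_not_dvd
  suffices h : w (algebraMap _ _ c) = 1 by
    conv_lhs => rw [hc]
    rw [map_mul, map_pow, map_mul, map_pow, h, mul_one]
  refine le_antisymm (hle c) (not_lt.1 fun hc1 ↦ ?_)
  obtain ⟨a, b, hab⟩ := (hπ.coprime_iff_not_dvd).2 hdvd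
  have h1 : w (algebraMap _ _ (a * π + b * c)) < 1 := by
    rw [map_add]
    refine w.map_add_lt ?_ ?_
    · rw [map_mul, map_mul]
      exact mul_lt_one_of_nonneg_of_lt_one_right (hle a) zero_le hlt
    · rw [map_mul, map_mul]
      exact mul_lt_one_of_nonneg_of_lt_one_right (hle b) zero_le hc1
  rw [hab, map_one, map_one] at h1
  exact lt_irrefl _ h1

lemma val_eq_zpow_ordAt {Fq : Type} [Field Fq] (w : Valuation (RatFunc Fq) ℝ≥0)
    (hle : ∀ p : Polynomial Fq, w (algebraMap _ _ p) ≤ 1) {π : Polynomial Fq}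
    (hπ : Irreducible π) (hlt : w (algebraMap _ _ π) < 1) {f : RatFunc Fq} (hf : f ≠ 0) :
    w f = w (algebraMap _ _ π) ^ ordAt π f := by
  have h0 : w (algebraMap _ (RatFunc Fq) π) ≠ 0 := by
    rw [Valuation.ne_zero_iff]
    simpa using hπ.ne_zero
  conv_lhs => rw [← RatFunc.num_div_denom f]
  rw [map_div₀, val_polynomial_eq w hle hπ hlt (RatFunc.num_ne_zero hf),
    val_polynomial_eq w hle hπ hlt (RatFunc.denom_ne_zero f), ordAt, zpow_sub₀ h0,
    zpow_natCast, zpow_natCast]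

lemma ordAt_self {Fq : Type} [Field Fq] {π : Polynomial Fq} (hπ : Irreducible π) :
    ordAt π (algebraMap _ _ π) = 1 := by
  have h1 : multiplicity π (1 : Polynomial Fq) = 0 :=
    multiplicity_eq_zero.2 fun h ↦ hπ.not_isUnit (isUnit_of_dvd_one h)
  simp [ordAt, h1]

lemma ordAt_of_ne {Fq : Type} [Field Fq] {π ρ : Polynomial Fq} (hπ : Irreducible π)
    (hπm : π.Monic) (hρ : Irreducible ρ) (hρm : ρ.Monic) (hne : π ≠ ρ) :
    ordAt π (algebraMap _ _ ρ) = 0 := by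
  have h1 : multiplicity π (1 : Polynomial Fq) = 0 :=
    multiplicity_eq_zero.2 fun h ↦ hπ.not_isUnit (isUnit_of_dvd_one h)
  have h2 : multiplicity π ρ = 0 := multiplicity_eq_zero.2 fun h ↦
    hne (Polynomial.eq_of_monic_of_associated hπm hρm (hπ.associated_of_dvd hρ h))
  simp [ordAt, h1, h2]

lemma zpow_rpow_logb {a b : ℝ} (ha : 0 < a) (hb : 1 < b) (n : ℤ) :
    (b ^ n) ^ Real.logb b a = a ^ n := by
  have hb0 : 0 < b := one_pos.trans hb
  rw [← Real.rpow_intCast_mul hb0.le, mul_comm, Real.rpow_mul_intCast hb0.le,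
    Real.rpow_logb hb0 hb.ne' ha]

/-- A nontrivial valuation, trivial on constants, that is at most `1` at `t` is less than `1` at
some monic irreducible polynomial. -/
lemma exists_monic_irreducible_val_lt_one {Fq : Type} [Field Fq]
    (w : Valuation (RatFunc Fq) ℝ≥0) [w.IsTrivialOn Fq] [w.IsNontrivial]
    (hX : w RatFunc.X ≤ 1) :
    ∃ π : Polynomial Fq, π.Monic ∧ Irreducible π ∧ w (algebraMap _ _ π) < 1 := by
  classical
  have hne := RatFunc.setOfPred_polynomial_valuation_lt_one_and_ne_zero_nonempty hX
  have hirr := RatFunc.irreducible_min_polynomial_valuation_lt_one_and_ne_zero hne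
  have hlt := RatFunc.valuation_uniformizingPolynomial_lt_one hX
  set π₀ := RatFunc.uniformizingPolynomial hX
  refine ⟨normalize π₀, Polynomial.monic_normalize hirr.ne_zero,
    (normalize_associated π₀).symm.irreducible hirr, ?_⟩
  obtain ⟨r, hr⟩ := (normalize_associated π₀).symm.dvd
  rw [hr, map_mul, map_mul]
  exact mul_lt_one_of_nonneg_of_lt_one_left zero_le hlt
    (Polynomial.valuation_le_one_of_valuation_X_le_one _ hX r)

/-- Classification of the places of `𝔽_q(t)`: every nontrivial absolute value
`|·| : 𝔽_q(t) → ℝ` is equivalent to the normalized absolute value of exactly one place of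
the projective line: for some `s > 0`, either `|f| = (q^(intDegree f))^s` for all nonzero
`f` (the place at infinity), or there is a unique monic irreducible `π ∈ 𝔽_q[t]` with
`|f| = (q^(−deg(π)·ord_π(f)))^s` for all nonzero `f`; the two alternatives are mutually
exclusive. -/
theorem places_of_Fq_t (Fq : Type) [Field Fq] [Fintype Fq] (q : ℕ) (hq : q = Fintype.card Fq)
    (v : AbsoluteValue (RatFunc Fq) ℝ) (hv : ∃ x : RatFunc Fq, x ≠ 0 ∧ v x ≠ 1) :
    ∃ s : ℝ, 0 < s ∧
      Xor'
        (∀ f : RatFunc Fq, f ≠ 0 → v f = ((q : ℝ) ^ f.intDegree) ^ s)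
        (∃! π : Polynomial Fq, (π.Monic ∧ Irreducible π) ∧
          ∀ f : RatFunc Fq, f ≠ 0 →
            v f = ((q : ℝ) ^ (-((π.natDegree : ℤ) * ordAt π f))) ^ s) := by
  have hq1 : (1 : ℝ) < q := by
    rw [hq]
    exact_mod_cast Fintype.one_lt_card (α := Fq)
  have hq0 : (0 : ℝ) < q := one_pos.trans hq1
  have hne0 : ∀ π : Polynomial Fq, Irreducible π → algebraMap _ (RatFunc Fq) π ≠ 0 :=
    fun π hπ ↦ by simpa using hπ.ne_zero
  have lt_one : ∀ s : ℝ, 0 < s → ∀ π : Polynomial Fq, Irreducible π →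
      (∀ f : RatFunc Fq, f ≠ 0 → v f = ((q : ℝ) ^ (-((π.natDegree : ℤ) * ordAt π f))) ^ s) →
      v (algebraMap _ _ π) < 1 := by
    intro s hs π hπ h
    rw [h _ (hne0 π hπ), ordAt_self hπ]
    refine Real.rpow_lt_one (by positivity) (zpow_lt_one_of_neg₀ hq1 ?_) hs
    have := hπ.natDegree_pos
    omega
  have excl : ∀ s : ℝ, 0 < s →
      (∀ f : RatFunc Fq, f ≠ 0 → v f = ((q : ℝ) ^ f.intDegree) ^ s) →
      ∀ π : Polynomial Fq, Irreducible π →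
      ¬ (∀ f : RatFunc Fq, f ≠ 0 →
        v f = ((q : ℝ) ^ (-((π.natDegree : ℤ) * ordAt π f))) ^ s) := by
    intro s hs hinf π hπ h
    refine (lt_one s hs π hπ h).not_gt ?_
    rw [hinf _ (hne0 π hπ), RatFunc.intDegree_polynomial]
    refine Real.one_lt_rpow (one_lt_zpow₀ hq1 ?_) hs
    have := hπ.natDegree_pos
    omega
  rcases lt_or_ge 1 (toVal v RatFunc.X) with hX | hX
  · have hX' : 1 < v RatFunc.X := hX
    have hs : 0 < Real.logb q (v RatFunc.X) := Real.logb_pos hq1 hX'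
    have hinf : ∀ f : RatFunc Fq, f ≠ 0 →
        v f = ((q : ℝ) ^ f.intDegree) ^ Real.logb q (v RatFunc.X) := by
      intro f hf
      have h := RatFunc.valuation_eq_valuation_X_zpow_intDegree_of_one_lt_valuation_X hX hf
      rw [zpow_rpow_logb (one_pos.trans hX') hq1, ← coe_toVal, h, NNReal.coe_zpow, coe_toVal]
    exact ⟨_, hs, .inl ⟨hinf, fun ⟨π, ⟨⟨_, hπ⟩, h⟩, _⟩ ↦ excl _ hs hinf π hπ h⟩⟩
  · have : (toVal v).IsNontrivial := by
      obtain ⟨x, hx0, hx1⟩ := hv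
      refine ⟨x, (Valuation.ne_zero_iff _).2 hx0, fun h ↦ hx1 ?_⟩
      rw [← coe_toVal, h, NNReal.coe_one]
    obtain ⟨π, hπm, hπ, hlt⟩ := exists_monic_irreducible_val_lt_one (toVal v) hX
    have hlt' : v (algebraMap _ _ π) < 1 := hlt
    have hpos : 0 < v (algebraMap _ _ π) := v.pos (hne0 π hπ)
    have hb : 1 < (q : ℝ) ^ π.natDegree := one_lt_pow₀ hq1 hπ.natDegree_pos.ne'
    have hs : 0 < Real.logb ((q : ℝ) ^ π.natDegree) (v (algebraMap _ _ π))⁻¹ :=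
      Real.logb_pos hb ((one_lt_inv₀ hpos).2 hlt')
    have hfin : ∀ f : RatFunc Fq, f ≠ 0 → v f =
        ((q : ℝ) ^ (-((π.natDegree : ℤ) * ordAt π f))) ^
          Real.logb ((q : ℝ) ^ π.natDegree) (v (algebraMap _ _ π))⁻¹ := by
      intro f hf
      have h := val_eq_zpow_ordAt (toVal v)
        (Polynomial.valuation_le_one_of_valuation_X_le_one _ hX) hπ hlt hf
      rw [← mul_neg, zpow_mul, zpow_natCast, zpow_rpow_logb (inv_pos.2 hpos) hb, inv_zpow',
        neg_neg, ← coe_toVal, h, NNReal.coe_zpow, coe_toVal]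
    refine ⟨_, hs, .inr ⟨⟨π, ⟨⟨hπm, hπ⟩, hfin⟩, ?_⟩, fun hinf ↦ excl _ hs hinf π hπ hfin⟩⟩
    rintro ρ ⟨⟨hρm, hρ⟩, h⟩
    by_contra hne
    have h1 := h _ (hne0 π hπ)
    rw [ordAt_of_ne hρ hρm hπ hπm hne, mul_zero, neg_zero, zpow_zero, Real.one_rpow] at h1
    exact hlt'.ne h1
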